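/- (Two-move periodicity) Let u, v ∈ ℕⁿ be nonzero vectors and let SG : ℕⁿ → ℕ be the Sprague–Grundy function of the two-move vector subtraction game with moves −u and −v, i.e. SG(x) = mex of { SG(x−u) : if x−u ∈ ℕⁿ } ∪ { SG(x−v) : if x−v ∈ ℕⁿ }. Then the game is periodic in u+v: SG(x + u + v) = SG(x) for every x ∈ ℕⁿ. -/

import Mathlib

/-- The minimum excludant of a set of naturals: the least natural number not in the set. -/
noncomputable def mex (S : Set ℕ) : ℕ := sInf {n : ℕ | n ∉ S}

theorem mex_not_mem {S : Set ℕ} (hS : S.Finite) : mex S ∉ S := by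
  have h : {n : ℕ | n ∉ S}.Nonempty := hS.infinite_compl.nonempty
  exact Nat.sInf_mem h

theorem mem_of_lt_mex {S : Set ℕ} {k : ℕ} (h : k < mex S) : k ∈ S := by
  by_contra hk
  exact absurd (Nat.sInf_le (s := {n : ℕ | n ∉ S}) hk) (not_le.mpr h)

/-- Two-move periodicity: if `SG` is the Sprague–Grundy function of the two-move vector
subtraction game on `ℕⁿ` with moves `−u` and `−v` (for nonzero `u, v ∈ ℕⁿ`), then the
game is periodic in `u + v`: `SG(x + u + v) = SG(x)` for every `x ∈ ℕⁿ`. -/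
theorem two_move_periodicity (n : ℕ) (u v : Fin n → ℕ) (hu : u ≠ 0) (hv : v ≠ 0)
    (SG : (Fin n → ℕ) → ℕ)
    (hSG : ∀ x : Fin n → ℕ, SG x = mex
      ((if ∀ i : Fin n, u i ≤ x i then ({SG (x - u)} : Set ℕ) else ∅) ∪
       (if ∀ i : Fin n, v i ≤ x i then ({SG (x - v)} : Set ℕ) else ∅))) :
    ∀ x : Fin n → ℕ, SG (x + u + v) = SG x := by
  have hfin : ∀ x : Fin n → ℕ, ((if ∀ i : Fin n, u i ≤ x i then ({SG (x - u)} : Set ℕ) else ∅) ∪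
       (if ∀ i : Fin n, v i ≤ x i then ({SG (x - v)} : Set ℕ) else ∅)).Finite := by
    intro x
    apply Set.Finite.union <;> split_ifs <;> simp
  have hne : ∀ x, SG x ∉ ((if ∀ i : Fin n, u i ≤ x i then ({SG (x - u)} : Set ℕ) else ∅) ∪
       (if ∀ i : Fin n, v i ≤ x i then ({SG (x - v)} : Set ℕ) else ∅)) := by
    intro x
    have h := mex_not_mem (hfin x)
    rwa [← hSG x] at h
  have hA : ∀ x, SG (x + u) ≠ SG x := by
    intro x h
    apply hne (x + u)
    left
    simp [h]
  have hB : ∀ x, SG (x + v) ≠ SG x := by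
    intro x h
    apply hne (x + v)
    right
    simp [h]
  have hC : ∀ x k, k < SG x → (∃ z, x = z + u ∧ SG z = k) ∨ (∃ z, x = z + v ∧ SG z = k) := by
    intro x k hk
    rw [hSG x] at hk
    rcases mem_of_lt_mex hk with h | h
    · left
      split_ifs at h with hx
      · exact ⟨x - u, (tsub_add_cancel_of_le (show u ≤ x from hx)).symm, h.symm⟩
      · exact h.elim
    · right
      split_ifs at h with hx
      · exact ⟨x - v, (tsub_add_cancel_of_le (show v ≤ x from hx)).symm, h.symm⟩
      · exact h.elim
  have hpos : ∀ w : Fin n → ℕ, w ≠ 0 → 0 < ∑ i, w i := by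
    intro w hw
    rw [Nat.pos_iff_ne_zero]
    intro h
    apply hw
    funext i
    exact Finset.sum_eq_zero_iff.mp h i (Finset.mem_univ i)
  have key : ∀ N : ℕ, ∀ x : Fin n → ℕ, ∑ i, x i < N → SG (x + u + v) = SG x := by
    intro N
    induction N with
    | zero => intro x hx; omega
    | succ N ih =>
      intro x hx
      apply le_antisymm
      · by_contra! hlt
        rcases hC _ _ hlt with ⟨z, hz, h⟩ | ⟨z, hz, h⟩
        · have : z = x + v := by
            apply add_right_cancel (b := u)
            rw [← hz]; abel
          exact hB x (this ▸ h)
        · have : z = x + u := (add_right_cancel hz).symm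
          exact hA x (this ▸ h)
      · by_contra! hlt
        rcases hC _ _ hlt with ⟨z, hz, h⟩ | ⟨z, hz, h⟩
        · have h1 : SG (z + u + v) = SG z := by
            apply ih
            have := hpos u hu
            simp only [hz, Pi.add_apply, Finset.sum_add_distrib] at hx
            omega
          rw [← hz] at h1
          apply hA (x + v)
          rw [h1, h]; congr 1; abel
        · have h1 : SG (z + u + v) = SG z := by
            apply ih
            have := hpos v hv
            simp only [hz, Pi.add_apply, Finset.sum_add_distrib] at hx
            omega
          have h2 : z + u + v = x + u := by rw [hz]; abel
          rw [h2] at h1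
          apply hB (x + u)
          rw [h1, h]
  intro x
  exact key _ x (Nat.lt_succ_self _)
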